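/- Twisted exterior derivative identity (Proposition 3.4(e), trivialized flat version): if (u, A) is a smooth solution of the YMH equations on U, then pointwise on U one has D₁σ₊ − i·D₂σ₊ = (F − h)·u, where D_jσ₊ = ∂_jσ₊ − iA_jσ₊. -/

import Mathlib

open MeasureTheory Complex

noncomputable section

/-- Partial derivative in the first coordinate direction. -/
def pd1 {E : Type*} [NormedAddCommGroup E] [NormedSpace ℝ E] (f : ℝ × ℝ → E) (x : ℝ × ℝ) : E :=
  fderiv ℝ f x (1, 0)

/-- Partial derivative in the second coordinate direction. -/
def pd2 {E : Type*} [NormedAddCommGroup E] [NormedSpace ℝ E] (f : ℝ × ℝ → E) (x : ℝ × ℝ) : E :=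
  fderiv ℝ f x (0, 1)

/-- First covariant derivative `D₁f = ∂₁f − iA₁f`. -/
def D1 (A1 : ℝ × ℝ → ℝ) (f : ℝ × ℝ → ℂ) (x : ℝ × ℝ) : ℂ :=
  pd1 f x - Complex.I * (A1 x) * f x

/-- Second covariant derivative `D₂f = ∂₂f − iA₂f`. -/
def D2 (A2 : ℝ × ℝ → ℝ) (f : ℝ × ℝ → ℂ) (x : ℝ × ℝ) : ℂ :=
  pd2 f x - Complex.I * (A2 x) * f x

/-- Curvature function `F = ∂₁A₂ − ∂₂A₁`. -/
def curv (A1 A2 : ℝ × ℝ → ℝ) (x : ℝ × ℝ) : ℝ := pd1 A2 x - pd2 A1 x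

/-- `h = (1 − |u|²)/(2ε²)`. -/
def hfun (ε : ℝ) (u : ℝ × ℝ → ℂ) (x : ℝ × ℝ) : ℝ := (1 - ‖u x‖ ^ 2) / (2 * ε ^ 2)

/-- `σ₊ = D₁u + iD₂u`. -/
def sigP (u : ℝ × ℝ → ℂ) (A1 A2 : ℝ × ℝ → ℝ) (x : ℝ × ℝ) : ℂ :=
  D1 A1 u x + Complex.I * D2 A2 u x

/-- `σ₋ = D₁u − iD₂u`. -/
def sigM (u : ℝ × ℝ → ℂ) (A1 A2 : ℝ × ℝ → ℝ) (x : ℝ × ℝ) : ℂ :=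
  D1 A1 u x - Complex.I * D2 A2 u x

/-- The Yang--Mills--Higgs energy over the fundamental domain `[0,1]²`. -/
def energy (ε : ℝ) (u : ℝ × ℝ → ℂ) (A1 A2 : ℝ × ℝ → ℝ) : ℝ :=
  ∫ x in Set.Icc (0:ℝ) 1 ×ˢ Set.Icc (0:ℝ) 1,
    (ε ^ 2 * curv A1 A2 x ^ 2 + ‖D1 A1 u x‖ ^ 2 + ‖D2 A2 u x‖ ^ 2
      + (1 - ‖u x‖ ^ 2) ^ 2 / (4 * ε ^ 2))

/-- `ℤ²`-periodicity. -/
def Periodic2 {E : Type*} (f : ℝ × ℝ → E) : Prop :=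
  ∀ x : ℝ × ℝ, f (x.1 + 1, x.2) = f x ∧ f (x.1, x.2 + 1) = f x

/-- The Yang--Mills--Higgs equations on all of `ℝ²`. -/
def IsYMH (ε : ℝ) (u : ℝ × ℝ → ℂ) (A1 A2 : ℝ × ℝ → ℝ) : Prop :=
  (∀ x, -(D1 A1 (D1 A1 u) x + D2 A2 (D2 A2 u) x) = (hfun ε u x : ℂ) * u x) ∧
  (∀ x, ε ^ 2 * pd2 (curv A1 A2) x = ((starRingEnd ℂ) (u x) * D1 A1 u x).im) ∧
  (∀ x, ε ^ 2 * pd1 (curv A1 A2) x = -((starRingEnd ℂ) (u x) * D2 A2 u x).im)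

/-- The Yang--Mills--Higgs equations on an open set `U ⊆ ℝ²`. -/
def IsYMHOn (ε : ℝ) (u : ℝ × ℝ → ℂ) (A1 A2 : ℝ × ℝ → ℝ) (U : Set (ℝ × ℝ)) : Prop :=
  (∀ x ∈ U, -(D1 A1 (D1 A1 u) x + D2 A2 (D2 A2 u) x) = (hfun ε u x : ℂ) * u x) ∧
  (∀ x ∈ U, ε ^ 2 * pd2 (curv A1 A2) x = ((starRingEnd ℂ) (u x) * D1 A1 u x).im) ∧
  (∀ x ∈ U, ε ^ 2 * pd1 (curv A1 A2) x = -((starRingEnd ℂ) (u x) * D2 A2 u x).im)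

/-- Stability: nonnegative second variation of the energy along all smooth periodic
variations of the section and the connection. -/
def Stable (ε : ℝ) (u : ℝ × ℝ → ℂ) (A1 A2 : ℝ × ℝ → ℝ) : Prop :=
  ∀ v : ℝ × ℝ → ℂ, ∀ a1 a2 : ℝ × ℝ → ℝ,
    ContDiff ℝ (⊤ : ℕ∞) v → Periodic2 v → ContDiff ℝ (⊤ : ℕ∞) a1 → Periodic2 a1 →
    ContDiff ℝ (⊤ : ℕ∞) a2 → Periodic2 a2 →
    0 ≤ iteratedDeriv 2 (fun t : ℝ =>
      energy ε (fun x => u x + t • v x)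
        (fun x => A1 x + t * a1 x) (fun x => A2 x + t * a2 x)) 0

/-!
Expanding the composition, `(D₁ - i D₂)(D₁ + i D₂) u = (D₁ D₁ + D₂ D₂) u + i [D₁, D₂] u`. The
commutator is multiplication by `-i F`, so the last term is `F u`, and the Higgs field equation
turns the first one into `-h u`.
-/

theorem differentiableAt_fderiv_of_contDiffAt_two {𝕜 E F : Type*} [NontriviallyNormedField 𝕜]
    [NormedAddCommGroup E] [NormedSpace 𝕜 E] [NormedAddCommGroup F] [NormedSpace 𝕜 F]
    {f : E → F} {x : E} (hf : ContDiffAt 𝕜 2 f x) : DifferentiableAt 𝕜 (fderiv 𝕜 f) x :=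
  (hf.fderiv_right (m := 1) (by norm_num)).differentiableAt one_ne_zero

section CovariantDerivative

variable {E : Type*} [NormedAddCommGroup E] [NormedSpace ℝ E]

/-- The covariant derivative in direction `v` on the trivial complex line bundle over `E`, where the
real function `a` is the value of the connection form on `v`. -/
def covDeriv (a : E → ℝ) (v : E) (f : E → ℂ) (x : E) : ℂ :=
  fderiv ℝ f x v - I * a x * f x

/-- The component along `(v, w)` of the curvature `dA` of a connection form `A` with `A v = a` and
`A w = b`. -/
def covCurv (a b : E → ℝ) (v w x : E) : ℝ :=
  fderiv ℝ b x v - fderiv ℝ a x w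

/-- Twice the covariant Wirtinger derivative `∂_A` in the complex coordinate `s + i t` of the
planes `x + s v + t w`, where the connection form takes the values `a` on `v` and `b` on `w`. -/
def covDel (a b : E → ℝ) (v w : E) (f : E → ℂ) (x : E) : ℂ :=
  covDeriv a v f x - I * covDeriv b w f x

/-- Twice the covariant Wirtinger derivative `∂̄_A` in the complex coordinate `s + i t` of the
planes `x + s v + t w`, where the connection form takes the values `a` on `v` and `b` on `w`. -/
def covDelBar (a b : E → ℝ) (v w : E) (f : E → ℂ) (x : E) : ℂ :=
  covDeriv a v f x + I * covDeriv b w f x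

variable {a b : E → ℝ} {f g : E → ℂ} {x : E}

theorem differentiableAt_covDeriv (ha : DifferentiableAt ℝ a x) (hf : ContDiffAt ℝ 2 f x) (v : E) :
    DifferentiableAt ℝ (covDeriv a v f) x := by
  have hdf := differentiableAt_fderiv_of_contDiffAt_two hf
  have hf' : DifferentiableAt ℝ f x := hf.differentiableAt two_ne_zero
  have ha' : DifferentiableAt ℝ (fun y => (a y : ℂ)) x := ofRealCLM.differentiableAt.comp x ha
  unfold covDeriv
  fun_prop

theorem covDeriv_add (hf : DifferentiableAt ℝ f x) (hg : DifferentiableAt ℝ g x) (v : E) :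
    covDeriv a v (fun y => f y + g y) x = covDeriv a v f x + covDeriv a v g x := by
  simp only [covDeriv, fderiv_fun_add hf hg, add_apply]
  ring

theorem covDeriv_const_mul (hf : DifferentiableAt ℝ f x) (c : ℂ) (v : E) :
    covDeriv a v (fun y => c * f y) x = c * covDeriv a v f x := by
  simp only [covDeriv, fderiv_const_mul hf, smul_apply, smul_eq_mul]
  ring

theorem fderiv_covDeriv_apply (ha : DifferentiableAt ℝ a x) (hf : ContDiffAt ℝ 2 f x) (v w : E) :
    fderiv ℝ (covDeriv a v f) x w = fderiv ℝ (fderiv ℝ f) x w v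
      - I * (fderiv ℝ a x w * f x + a x * fderiv ℝ f x w) := by
  have hdf : HasFDerivAt (fun y => fderiv ℝ f y v) ((fderiv ℝ (fderiv ℝ f) x).flip v) x := by
    simpa using (differentiableAt_fderiv_of_contDiffAt_two hf).hasFDerivAt.clm_apply
      (hasFDerivAt_const v x)
  have ha' : HasFDerivAt (fun y => (a y : ℂ)) (ofRealCLM.comp (fderiv ℝ a x)) x :=
    ofRealCLM.hasFDerivAt.comp x ha.hasFDerivAt
  have hf' : HasFDerivAt f (fderiv ℝ f x) x := (hf.differentiableAt two_ne_zero).hasFDerivAt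
  have hcov : HasFDerivAt (covDeriv a v f) _ x := hdf.sub ((ha'.const_mul I).mul hf')
  rw [hcov.fderiv]
  simp only [sub_apply, ContinuousLinearMap.flip_apply, add_apply, smul_apply, smul_eq_mul,
    ContinuousLinearMap.comp_apply, ofRealCLM_apply]
  ring

theorem covDeriv_covDeriv (ha : DifferentiableAt ℝ a x) (hf : ContDiffAt ℝ 2 f x) (v w : E) :
    covDeriv b w (covDeriv a v f) x = fderiv ℝ (fderiv ℝ f) x w v
      - I * (fderiv ℝ a x w * f x + a x * fderiv ℝ f x w + b x * fderiv ℝ f x v)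
      - a x * b x * f x := by
  rw [covDeriv, fderiv_covDeriv_apply ha hf, covDeriv]
  linear_combination a x * b x * f x * I_mul_I

theorem covDeriv_commutator (ha : DifferentiableAt ℝ a x) (hb : DifferentiableAt ℝ b x)
    (hf : ContDiffAt ℝ 2 f x) (v w : E) :
    covDeriv a v (covDeriv b w f) x - covDeriv b w (covDeriv a v f) x
      = -I * covCurv a b v w x * f x := by
  have hsymm : fderiv ℝ (fderiv ℝ f) x v w = fderiv ℝ (fderiv ℝ f) x w v :=
    hf.isSymmSndFDerivAt (by simp) v w
  rw [covDeriv_covDeriv hb hf, covDeriv_covDeriv ha hf, hsymm, covCurv, ofReal_sub]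
  ring

theorem covDel_covDelBar (ha : DifferentiableAt ℝ a x) (hb : DifferentiableAt ℝ b x)
    (hf : ContDiffAt ℝ 2 f x) (v w : E) :
    covDel a b v w (covDelBar a b v w f) x =
      covDeriv a v (covDeriv a v f) x + covDeriv b w (covDeriv b w f) x
        + covCurv a b v w x * f x := by
  have hav := differentiableAt_covDeriv ha hf v
  have hbw := differentiableAt_covDeriv hb hf w
  have hcomm := covDeriv_commutator ha hb hf v w
  unfold covDel covDelBar
  rw [covDeriv_add hav (hbw.const_mul I), covDeriv_add hav (hbw.const_mul I),
    covDeriv_const_mul hbw, covDeriv_const_mul hbw]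
  linear_combination I * hcomm
    - (covDeriv b w (covDeriv b w f) x + covCurv a b v w x * f x) * I_mul_I

theorem twisted_exterior_derivative_identity_general (ha : DifferentiableAt ℝ a x)
    (hb : DifferentiableAt ℝ b x) (hf : ContDiffAt ℝ 2 f x) {v w : E} {h : ℝ}
    (hHiggs : -(covDeriv a v (covDeriv a v f) x + covDeriv b w (covDeriv b w f) x) = h * f x) :
    covDel a b v w (covDelBar a b v w f) x = ((covCurv a b v w x - h : ℝ) : ℂ) * f x := by
  rw [covDel_covDelBar ha hb hf, ofReal_sub]
  linear_combination -hHiggs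

end CovariantDerivative

/-- Twisted exterior derivative identity (Proposition 3.4(e), trivialized flat version). -/
theorem twisted_exterior_derivative_identity
    (ε : ℝ) (hε : 0 < ε) (U : Set (ℝ × ℝ)) (hU : IsOpen U)
    (u : ℝ × ℝ → ℂ) (A1 A2 : ℝ × ℝ → ℝ)
    (hu : ContDiffOn ℝ (⊤ : ℕ∞) u U) (hA1 : ContDiffOn ℝ (⊤ : ℕ∞) A1 U) (hA2 : ContDiffOn ℝ (⊤ : ℕ∞) A2 U)
    (hYMH : IsYMHOn ε u A1 A2 U) :
    ∀ x ∈ U,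
      D1 A1 (sigP u A1 A2) x - Complex.I * D2 A2 (sigP u A1 A2) x =
        ((curv A1 A2 x - hfun ε u x : ℝ) : ℂ) * u x := by
  intro x hx
  have hxU : U ∈ nhds x := hU.mem_nhds hx
  -- `D1`, `D2`, `sigP`, `curv` unfold to `covDeriv`, `covDelBar`, `covCurv` at these `v`, `w`.
  exact twisted_exterior_derivative_identity_general (v := (1, 0)) (w := (0, 1))
    ((hA1.contDiffAt hxU).differentiableAt (by simp))
    ((hA2.contDiffAt hxU).differentiableAt (by simp))
    (contDiffAt_infty.1 (hu.contDiffAt hxU) 2) (hYMH.1 x hx)
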